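/- Let A and B be Abelian heaps, e_A ∈ A, e_B ∈ B, and let (C, ι_A, ι_B) be a coproduct of A and B in the category of Abelian heaps. Then C is isomorphic as a heap to the heap H(G(A;e_A) × G(B;e_B) × ℤ) associated to the direct sum of the Abelian groups G(A;e_A), G(B;e_B) and ℤ. -/

import Mathlib

/-- A ternary operation is a heap operation if it is associative and
satisfies the Mal'cev identities. -/
def IsHeap {H : Type*} (op : H → H → H → H) : Prop :=
  (∀ a b c d e : H, op (op a b c) d e = op a b (op c d e)) ∧
  (∀ a b : H, op a b b = a) ∧ (∀ a b : H, op b b a = a)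

/-- An Abelian heap is a heap whose ternary operation satisfies
`[a,b,c] = [c,b,a]`. -/
def IsAbelianHeap {H : Type*} (op : H → H → H → H) : Prop :=
  IsHeap op ∧ ∀ a b c : H, op a b c = op c b a

/-!
Choosing a base point turns an Abelian heap into an Abelian group, and heap morphisms between
Abelian groups are exactly the affine maps: a constant plus a homomorphism. An affine map out of
`A` and one out of `B` have independent linear parts and independent values at the base points;
the difference of these two values is the image of the generator of an extra copy of `ℤ`. Hence
`A × B × ℤ`, with `a ↦ (a, 0, 0)` and `b ↦ (0, b, 1)`, is a coproduct, and coproducts are unique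
up to isomorphism.
-/

universe u

/-- Morphisms of heaps, with the ternary operations given explicitly. -/
def IsHeapHom {H K : Type*} (opH : H → H → H → H) (opK : K → K → K → K) (f : H → K) : Prop :=
  ∀ x y z : H, f (opH x y z) = opK (f x) (f y) (f z)

theorem IsHeapHom.comp {H K L : Type*} {opH : H → H → H → H} {opK : K → K → K → K}
    {opL : L → L → L → L} {g : K → L} {f : H → K} (hg : IsHeapHom opK opL g)
    (hf : IsHeapHom opH opK f) : IsHeapHom opH opL (g ∘ f) := fun x y z => by
  simp only [Function.comp_apply, hf x y z, hg (f x) (f y) (f z)]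

theorem isHeapHom_id {H : Type*} (op : H → H → H → H) : IsHeapHom op op id :=
  fun _ _ _ => rfl

/-- The heap `H(G)` of an Abelian group `G`. -/
def groupHeap (G : Type*) [AddCommGroup G] (x y z : G) : G := x - y + z

theorem isAbelianHeap_groupHeap (G : Type*) [AddCommGroup G] : IsAbelianHeap (groupHeap G) := by
  refine ⟨⟨fun a b c d e => ?_, fun a b => ?_, fun a b => ?_⟩, fun a b c => ?_⟩ <;>
    simp only [groupHeap] <;> abel

namespace IsAbelianHeap

variable {H : Type*} {op : H → H → H → H}

/-- The retract `G(H; e)` of an Abelian heap at `e`. Subtraction is left to its default value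
`x + -y`. -/
abbrev retract (h : IsAbelianHeap op) (e : H) : AddCommGroup H where
  add x y := op x e y
  zero := e
  neg x := op e x e
  add_assoc a b c := h.1.1 a e b e c
  zero_add a := h.1.2.2 a e
  add_zero a := h.1.2.1 a e
  neg_add_cancel a :=
    calc op (op e a e) e a = op e a (op e e a) := h.1.1 e a e e a
      _ = op e a a := by rw [h.1.2.2]
      _ = e := h.1.2.1 e a
  add_comm a b := h.2 a e b
  nsmul := @nsmulRec H ⟨e⟩ ⟨fun x y => op x e y⟩
  zsmul := @zsmulRec H ⟨e⟩ ⟨fun x y => op x e y⟩ ⟨fun x => op e x e⟩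
    (@nsmulRec H ⟨e⟩ ⟨fun x y => op x e y⟩)

theorem groupHeap_retract (h : IsAbelianHeap op) (e : H) :
    @groupHeap H (h.retract e) = op := by
  funext x y z
  calc op (op x e (op e y e)) e z = op (op (op x e e) y e) e z := by rw [h.1.1 x e e y e]
    _ = op (op x y e) e z := by rw [h.1.2.1]
    _ = op x y (op e e z) := h.1.1 x y e e z
    _ = op x y z := by rw [h.1.2.2]

end IsAbelianHeap

section Affine

variable {G K : Type*} [AddCommGroup G] [AddCommGroup K]

theorem isHeapHom_const_add (c : K) (L : G →+ K) :
    IsHeapHom (groupHeap G) (groupHeap K) (fun x => c + L x) := fun x y z => by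
  simp only [groupHeap, map_add, map_sub]
  abel

/-- A heap morphism between Abelian groups is affine; this is its linear part `x ↦ f x - f 0`. -/
def IsHeapHom.linearPart {f : G → K} (hf : IsHeapHom (groupHeap G) (groupHeap K) f) : G →+ K :=
  AddMonoidHom.mk' (fun x => f x - f 0) fun x y => by
    have hxy : f (x + y) = f x - f 0 + f y := by simpa only [groupHeap, sub_zero] using hf x 0 y
    rw [hxy]
    abel

theorem IsHeapHom.linearPart_apply {f : G → K} (hf : IsHeapHom (groupHeap G) (groupHeap K) f)
    (x : G) : hf.linearPart x = f x - f 0 := rfl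

end Affine

/-- `C`, with injections `ιA` and `ιB`, is a coproduct of `A` and `B` in the category of Abelian
heaps in the universe `u`. -/
structure IsAbelianHeapCoproduct {A B C : Type u} (opA : A → A → A → A) (opB : B → B → B → B)
    (opC : C → C → C → C) (ιA : A → C) (ιB : B → C) : Prop where
  isAbelianHeap : IsAbelianHeap opC
  isHeapHom_inl : IsHeapHom opA opC ιA
  isHeapHom_inr : IsHeapHom opB opC ιB
  existsUnique_desc : ∀ (H : Type u) (opH : H → H → H → H), IsAbelianHeap opH →
    ∀ (φ : A → H) (ψ : B → H), IsHeapHom opA opH φ → IsHeapHom opB opH ψ →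
      ∃! ξ : C → H, IsHeapHom opC opH ξ ∧ (∀ a, ξ (ιA a) = φ a) ∧ ∀ b, ξ (ιB b) = ψ b

namespace IsAbelianHeapCoproduct

variable {A B C D : Type u} {opA : A → A → A → A} {opB : B → B → B → B}
  {opC : C → C → C → C} {opD : D → D → D → D} {ιA : A → C} {ιB : B → C} {κA : A → D} {κB : B → D}

theorem eq_id (h : IsAbelianHeapCoproduct opA opB opC ιA ιB) {f : C → C}
    (hf : IsHeapHom opC opC f) (hfA : ∀ a, f (ιA a) = ιA a) (hfB : ∀ b, f (ιB b) = ιB b) :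
    f = id :=
  (h.existsUnique_desc C opC h.isAbelianHeap ιA ιB h.isHeapHom_inl h.isHeapHom_inr).unique
    ⟨hf, hfA, hfB⟩ ⟨isHeapHom_id opC, fun _ => rfl, fun _ => rfl⟩

theorem exists_bijective_isHeapHom (hC : IsAbelianHeapCoproduct opA opB opC ιA ιB)
    (hD : IsAbelianHeapCoproduct opA opB opD κA κB) :
    ∃ φ : C → D, Function.Bijective φ ∧ IsHeapHom opC opD φ := by
  obtain ⟨φ, ⟨hφ, hφA, hφB⟩, -⟩ := hC.existsUnique_desc D opD hD.isAbelianHeap κA κB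
    hD.isHeapHom_inl hD.isHeapHom_inr
  obtain ⟨ψ, ⟨hψ, hψA, hψB⟩, -⟩ := hD.existsUnique_desc C opC hC.isAbelianHeap ιA ιB
    hC.isHeapHom_inl hC.isHeapHom_inr
  have hψφ : ψ ∘ φ = id := hC.eq_id (hψ.comp hφ)
    (fun a => by rw [Function.comp_apply, hφA, hψA])
    (fun b => by rw [Function.comp_apply, hφB, hψB])
  have hφψ : φ ∘ ψ = id := hD.eq_id (hφ.comp hψ)
    (fun a => by rw [Function.comp_apply, hψA, hφA])
    (fun b => by rw [Function.comp_apply, hψB, hφB])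
  exact ⟨φ, Function.bijective_iff_has_inverse.mpr ⟨ψ, congrFun hψφ, congrFun hφψ⟩, hφ⟩

end IsAbelianHeapCoproduct

section DirectSum

variable {G G' K : Type*} [AddCommGroup G] [AddCommGroup G'] [AddCommGroup K]

theorem IsHeapHom.ext_prod_int {ξ ζ : G × G' × ℤ → K}
    (hξ : IsHeapHom (groupHeap (G × G' × ℤ)) (groupHeap K) ξ)
    (hζ : IsHeapHom (groupHeap (G × G' × ℤ)) (groupHeap K) ζ)
    (h_inl : ∀ a, ξ (a, 0, 0) = ζ (a, 0, 0)) (h_inr : ∀ b, ξ (0, b, 1) = ζ (0, b, 1)) :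
    ξ = ζ := by
  have h_zero : ξ 0 = ζ 0 := h_inl 0
  have hL_inl (a : G) : hξ.linearPart (a, 0, 0) = hζ.linearPart (a, 0, 0) := by
    simp only [linearPart_apply, h_inl, h_zero]
  have hL_inr (b : G') : hξ.linearPart (0, b, 1) = hζ.linearPart (0, b, 1) := by
    simp only [linearPart_apply, h_inr, h_zero]
  have hL : hξ.linearPart = hζ.linearPart := by
    ext ⟨a, b, n⟩
    have decomp : ((a, b, n) : G × G' × ℤ) =
        (a, 0, 0) + ((0, b, 1) - (0, 0, 1)) + n • (0, 0, 1) := by simp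
    rw [decomp]
    simp only [map_add, map_sub, map_zsmul, hL_inl, hL_inr]
  funext p
  have hp : ξ p - ξ 0 = ζ p - ζ 0 := DFunLike.congr_fun hL p
  rwa [h_zero, sub_left_inj] at hp

theorem existsUnique_isHeapHom_prod_int {φ : G → K} {ψ : G' → K}
    (hφ : IsHeapHom (groupHeap G) (groupHeap K) φ)
    (hψ : IsHeapHom (groupHeap G') (groupHeap K) ψ) :
    ∃! ξ : G × G' × ℤ → K, IsHeapHom (groupHeap (G × G' × ℤ)) (groupHeap K) ξ ∧
      (∀ a, ξ (a, 0, 0) = φ a) ∧ ∀ b, ξ (0, b, 1) = ψ b := by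
  let L : G × G' × ℤ →+ K :=
    hφ.linearPart.coprod (hψ.linearPart.coprod (zmultiplesHom K (ψ 0 - φ 0)))
  have hL : IsHeapHom (groupHeap (G × G' × ℤ)) (groupHeap K) (fun p => φ 0 + L p) :=
    isHeapHom_const_add (φ 0) L
  have hLφ (a : G) : φ 0 + L (a, 0, 0) = φ a := by simp [L, IsHeapHom.linearPart_apply]
  have hLψ (b : G') : φ 0 + L (0, b, 1) = ψ b := by simp [L, IsHeapHom.linearPart_apply]
  refine ⟨fun p => φ 0 + L p, ⟨hL, hLφ, hLψ⟩, fun ζ ⟨hζ, hζφ, hζψ⟩ => ?_⟩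
  exact hζ.ext_prod_int hL (fun a => (hζφ a).trans (hLφ a).symm)
    (fun b => (hζψ b).trans (hLψ b).symm)

end DirectSum

theorem isAbelianHeapCoproduct_groupHeap (G G' : Type u) [AddCommGroup G] [AddCommGroup G'] :
    IsAbelianHeapCoproduct (groupHeap G) (groupHeap G') (groupHeap (G × G' × ℤ))
      (fun a => (a, 0, 0)) (fun b => (0, b, 1)) where
  isAbelianHeap := isAbelianHeap_groupHeap _
  isHeapHom_inl x y z := by simp [groupHeap]
  isHeapHom_inr x y z := by simp [groupHeap]
  existsUnique_desc H opH hH φ ψ hφ hψ := by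
    let := hH.retract (φ 0)
    rw [← hH.groupHeap_retract (φ 0)] at hφ hψ ⊢
    exact existsUnique_isHeapHom_prod_int hφ hψ

theorem coproduct_iso_heap_of_direct_sum_general {A B C : Type u} {opA : A → A → A → A}
    (hA : IsAbelianHeap opA) {opB : B → B → B → B} (hB : IsAbelianHeap opB) (eA : A) (eB : B)
    {opC : C → C → C → C} {ιA : A → C} {ιB : B → C}
    (hC : IsAbelianHeapCoproduct opA opB opC ιA ιB) :
    letI := hA.retract eA
    letI := hB.retract eB
    ∃ φ : C → A × B × ℤ, Function.Bijective φ ∧ IsHeapHom opC (groupHeap (A × B × ℤ)) φ := by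
  let := hA.retract eA
  let := hB.retract eB
  have hD := isAbelianHeapCoproduct_groupHeap A B
  rw [hA.groupHeap_retract, hB.groupHeap_retract] at hD
  exact hC.exists_bijective_isHeapHom hD

/-- Let `A`, `B` be Abelian heaps, `e_A ∈ A`, `e_B ∈ B`, and
let `(C, ι_A, ι_B)` be a coproduct of `A` and `B` in the category of Abelian
heaps.  Then `C` is isomorphic as a heap to the heap associated to the direct
sum of the Abelian groups `G(A;e_A)`, `G(B;e_B)` and `ℤ`; on the product
`A × B × ℤ` that heap operation is `(p,q,r) ↦ p - q + r` computed componentwise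
in the retract groups (where `x + y = [x,e,y]` and `-y = [e,y,e]`) and in `ℤ`. -/
theorem coproduct_iso_heap_of_direct_sum {A B C : Type} (opA : A → A → A → A)
    (hA : IsAbelianHeap opA) (opB : B → B → B → B) (hB : IsAbelianHeap opB)
    (eA : A) (eB : B)
    (opC : C → C → C → C) (hC : IsAbelianHeap opC) (ιA : A → C) (ιB : B → C)
    (hιA : ∀ a b c : A, ιA (opA a b c) = opC (ιA a) (ιA b) (ιA c))
    (hιB : ∀ a b c : B, ιB (opB a b c) = opC (ιB a) (ιB b) (ιB c))
    (huniv : ∀ (H : Type) (opH : H → H → H → H), IsAbelianHeap opH →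
      ∀ (φ : A → H) (ψ : B → H),
        (∀ a b c : A, φ (opA a b c) = opH (φ a) (φ b) (φ c)) →
        (∀ a b c : B, ψ (opB a b c) = opH (ψ a) (ψ b) (ψ c)) →
        ∃! ξ : C → H,
          (∀ x y z : C, ξ (opC x y z) = opH (ξ x) (ξ y) (ξ z)) ∧
          (∀ a : A, ξ (ιA a) = φ a) ∧ (∀ b : B, ξ (ιB b) = ψ b)) :
    ∃ φ : C → A × B × ℤ, Function.Bijective φ ∧
      ∀ x y z : C, φ (opC x y z) =
        (opA (opA (φ x).1 eA (opA eA (φ y).1 eA)) eA (φ z).1,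
         opB (opB (φ x).2.1 eB (opB eB (φ y).2.1 eB)) eB (φ z).2.1,
         (φ x).2.2 - (φ y).2.2 + (φ z).2.2) :=
  coproduct_iso_heap_of_direct_sum_general hA hB eA eB ⟨hC, hιA, hιB, huniv⟩
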